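/- Assume 0≤ρ0(R)≤k1 on [0,1] and that Φ satisfies the growth condition (G) with (H1) and (H3). Then there exists a constant c>0, depending only on k1, C, γ and s, such that for every λ>0 and every r ∈ A_λ one has ∫₀¹ ρ0(R) M_R R² / r(R)² dR ≤ c (∫₀¹ δ_r(R)^{−s} R² dR)^{1/s} (I_mec(r))^{1/γ}. -/

import Mathlib

open MeasureTheory Real Set Filter

/-- `M_R = 4π ∫₀^R ρ0(u) u² du`. -/
noncomputable def Mfun (ρ0 : ℝ → ℝ) (R : ℝ) : ℝ := 4 * π * ∫ u in (0:ℝ)..R, ρ0 u * u ^ 2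

/-- Mechanical energy `I_mec(r) = ∫₀¹ Φ(R, r'(R), r(R)/R, r(R)/R) R² dR`. -/
noncomputable def Imec (Φ : ℝ → ℝ → ℝ → ℝ → ℝ) (r r' : ℝ → ℝ) : ℝ :=
  ∫ R in Ioo (0:ℝ) 1, Φ R (r' R) (r R / R) (r R / R) * R ^ 2

/-- `δ_r(R) = r'(R) (r(R)/R)²`. -/
noncomputable def deltaR (r r' : ℝ → ℝ) (R : ℝ) : ℝ := r' R * (r R / R) ^ 2

/-- The admissible set `A_λ`. -/
def Adm (Φ : ℝ → ℝ → ℝ → ℝ → ℝ) (lam : ℝ) (r r' : ℝ → ℝ) : Prop :=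
  IntervalIntegrable r' volume 0 1 ∧
  (∀ x ∈ Icc (0:ℝ) 1, r x = r 0 + ∫ t in (0:ℝ)..x, r' t) ∧
  (∀ᵐ R ∂volume.restrict (Ioo (0:ℝ) 1), 0 < r' R) ∧
  r 1 = lam ∧ 0 ≤ r 0 ∧
  IntegrableOn (fun R => Φ R (r' R) (r R / R) (r R / R) * R ^ 2) (Ioo (0:ℝ) 1)

/-!
Since `ρ0 ≤ k`, the mass satisfies `M_R ≤ (4π/3) k R³`, so the gravitational integrand is at most
`(4π/3) k² (R / r)² R²` on the unit interval. The identity `(R / r)² = r' / δ_r` turns the remaining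
integral into the pairing of `r'` with `1 / δ_r` in the measure `R² dR`. Hölder's inequality bounds
it by the `L^γ` norm of `r'`, which the energy controls, times the norm of `1 / δ_r` in the
conjugate exponent `γ / (γ - 1) ≤ s`. As `R² dR` has total mass at most one on the unit interval,
the latter norm is at most the `L^s` norm.
-/

section Integral

variable {α : Type*} [MeasurableSpace α] {μ : Measure α}

theorem lpNorm_ofReal_eq_of_nonneg {p : ℝ} (hp : 0 < p) {f : α → ℝ} (hf : 0 ≤ᵐ[μ] f)
    (hfm : AEStronglyMeasurable f μ) :
    lpNorm f (ENNReal.ofReal p) μ = (∫ x, f x ^ p ∂μ) ^ (1 / p) := by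
  rw [lpNorm_eq_integral_norm_rpow_toReal (by simpa using hp) ENNReal.ofReal_ne_top hfm,
    ENNReal.toReal_ofReal hp.le, one_div]
  congr 1
  refine integral_congr_ae ?_
  filter_upwards [hf] with x hx
  rw [Real.norm_of_nonneg hx]

theorem memLp_ofReal_of_integrable_rpow {p : ℝ} (hp : 0 < p) {f : α → ℝ} (hf : 0 ≤ᵐ[μ] f)
    (hfm : AEStronglyMeasurable f μ) (hfp : Integrable (fun x => f x ^ p) μ) :
    MemLp f (ENNReal.ofReal p) μ := by
  refine (integrable_norm_rpow_iff hfm (by simpa using hp) ENNReal.ofReal_ne_top).1 (hfp.congr ?_)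
  filter_upwards [hf] with x hx
  rw [Real.norm_of_nonneg hx, ENNReal.toReal_ofReal hp.le]

theorem lpNorm_le_lpNorm_mul_rpow_measure_univ [IsFiniteMeasure μ] {E : Type*}
    [NormedAddCommGroup E] {p q : ENNReal} (hp : p ≠ 0) (hpq : p ≤ q) {f : α → E}
    (hf : MemLp f q μ) :
    lpNorm f p μ ≤ lpNorm f q μ * μ.real univ ^ (1 / p.toReal - 1 / q.toReal) := by
  have hexp : 0 ≤ 1 / p.toReal - 1 / q.toReal := by
    rcases eq_or_ne q ⊤ with rfl | hq
    · simp
    · exact sub_nonneg.2 (one_div_le_one_div_of_le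
        (ENNReal.toReal_pos hp (ne_top_of_le_ne_top hq hpq)) (ENNReal.toReal_mono hq hpq))
  rw [← toReal_eLpNorm hf.1, ← toReal_eLpNorm hf.1, measureReal_def, ENNReal.toReal_rpow,
    ← ENNReal.toReal_mul]
  exact ENNReal.toReal_mono
    (ENNReal.mul_ne_top hf.2.ne (ENNReal.rpow_ne_top_of_nonneg hexp (measure_ne_top μ univ)))
    (eLpNorm_le_eLpNorm_mul_rpow_measure_univ hpq hf.1)

theorem integral_mul_le_Lp_mul_Lq_of_conjExponent_le [IsFiniteMeasure μ] {p p' q : ℝ}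
    (hp : p.HolderConjugate p') (hq : p' ≤ q) {f g : α → ℝ} (hf : 0 ≤ᵐ[μ] f) (hg : 0 ≤ᵐ[μ] g)
    (hfp : MemLp f (ENNReal.ofReal p) μ) (hgq : MemLp g (ENNReal.ofReal q) μ) :
    ∫ x, f x * g x ∂μ ≤ (∫ x, f x ^ p ∂μ) ^ (1 / p) *
      ((∫ x, g x ^ q ∂μ) ^ (1 / q) * μ.real univ ^ (1 / p' - 1 / q)) := by
  have hp' : 0 < p' := hp.symm.pos
  have hpq : ENNReal.ofReal p' ≤ ENNReal.ofReal q := ENNReal.ofReal_le_ofReal hq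
  have hmono := lpNorm_le_lpNorm_mul_rpow_measure_univ (by simpa using hp') hpq hgq
  rw [lpNorm_ofReal_eq_of_nonneg hp' hg hgq.1,
    lpNorm_ofReal_eq_of_nonneg (hp'.trans_le hq) hg hgq.1,
    ENNReal.toReal_ofReal hp'.le, ENNReal.toReal_ofReal (hp'.le.trans hq)] at hmono
  have hnn : 0 ≤ (∫ x, f x ^ p ∂μ) ^ (1 / p) := by
    rw [← lpNorm_ofReal_eq_of_nonneg hp.pos hf hfp.1]
    exact lpNorm_nonneg
  exact (integral_mul_le_Lp_mul_Lq_of_nonneg hp hf hg hfp (hgq.mono_exponent hpq)).trans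
    (mul_le_mul_of_nonneg_left hmono hnn)

theorem integral_pos_of_ae_pos (hμ : μ ≠ 0) {f : α → ℝ} (hf : ∀ᵐ x ∂μ, 0 < f x)
    (hfi : Integrable f μ) : 0 < ∫ x, f x ∂μ := by
  refine (integral_pos_iff_support_of_nonneg_ae (hf.mono fun _ hx => hx.le) hfi).2 ?_
  have hsupp : Function.support f =ᵐ[μ] univ :=
    eventuallyEq_univ.2 (hf.mono fun _ hx => hx.ne')
  rwa [measure_congr hsupp, Measure.measure_univ_pos]

theorem integrable_of_const_mul_le {f g : α → ℝ} {c : ℝ} (hc : 0 < c) (hf : Integrable f μ)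
    (hgm : AEStronglyMeasurable g μ) (hg : 0 ≤ᵐ[μ] g) (hgf : ∀ᵐ x ∂μ, c * g x ≤ f x) :
    Integrable g μ := by
  refine (hf.const_mul c⁻¹).mono' hgm ?_
  filter_upwards [hg, hgf] with x hgx hgfx
  rw [Real.norm_of_nonneg hgx]
  exact (le_inv_mul_iff₀ hc).2 hgfx

end Integral

section RadialMeasure

/-- The radial part `R² dR` of Lebesgue measure on the unit ball, without the factor `4π`. The
weight `R²` of the energy integrals is absorbed into it, so that Hölder's inequality applies to
`r'` and `1 / δ_r` themselves. -/
noncomputable def radialMeasure : Measure ℝ :=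
  (volume.restrict (Ioo 0 1)).withDensity fun R => ENNReal.ofReal (R ^ 2)

theorem radialMeasure_absolutelyContinuous : radialMeasure ≪ volume.restrict (Ioo 0 1) :=
  withDensity_absolutelyContinuous _ _

theorem ae_radialMeasure_mem_Ioo : ∀ᵐ R ∂radialMeasure, R ∈ Ioo (0 : ℝ) 1 :=
  radialMeasure_absolutelyContinuous.ae_le (ae_restrict_mem measurableSet_Ioo)

theorem radialMeasure_univ_le_one : radialMeasure univ ≤ 1 := by
  rw [radialMeasure, withDensity_apply _ MeasurableSet.univ, Measure.restrict_univ]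
  calc ∫⁻ R in Ioo (0 : ℝ) 1, ENNReal.ofReal (R ^ 2)
      ≤ ∫⁻ _ in Ioo (0 : ℝ) 1, 1 := setLIntegral_mono measurable_const fun R hR =>
        ENNReal.ofReal_le_one.2 (pow_le_one₀ hR.1.le hR.2.le)
    _ = 1 := by simp

instance : IsFiniteMeasure radialMeasure :=
  ⟨radialMeasure_univ_le_one.trans_lt ENNReal.one_lt_top⟩

theorem integral_radialMeasure (f : ℝ → ℝ) :
    ∫ R, f R ∂radialMeasure = ∫ R in Ioo (0 : ℝ) 1, f R * R ^ 2 := by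
  rw [radialMeasure, integral_withDensity_eq_integral_toReal_smul (by fun_prop) (by simp)]
  simp only [ENNReal.toReal_ofReal (sq_nonneg _), smul_eq_mul, mul_comm]

theorem integrable_radialMeasure_iff {f : ℝ → ℝ} :
    Integrable f radialMeasure ↔ IntegrableOn (fun R => f R * R ^ 2) (Ioo 0 1) := by
  rw [radialMeasure, integrable_withDensity_iff (by fun_prop) (by simp)]
  simp only [ENNReal.toReal_ofReal (sq_nonneg _), IntegrableOn]

end RadialMeasure

section Mass

variable {ρ0 : ℝ → ℝ} {k R : ℝ}

theorem Mfun_nonneg (hR : 0 ≤ R) (hρ : ∀ u ∈ Icc 0 R, 0 ≤ ρ0 u) : 0 ≤ Mfun ρ0 R :=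
  mul_nonneg (by positivity) <| intervalIntegral.integral_nonneg hR fun u hu =>
    mul_nonneg (hρ u hu) (sq_nonneg u)

theorem Mfun_le (hR : 0 ≤ R) (hρm : Measurable ρ0) (hρ : ∀ u ∈ Icc 0 R, 0 ≤ ρ0 u ∧ ρ0 u ≤ k) :
    Mfun ρ0 R ≤ 4 * π / 3 * k * R ^ 3 := by
  have hbound : ∀ u ∈ Icc 0 R, ρ0 u * u ^ 2 ≤ k * u ^ 2 := fun u hu =>
    mul_le_mul_of_nonneg_right (hρ u hu).2 (sq_nonneg u)
  have hk : IntervalIntegrable (fun u => k * u ^ 2) volume 0 R :=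
    (by fun_prop : Continuous fun u : ℝ => k * u ^ 2).intervalIntegrable 0 R
  have hint : IntervalIntegrable (fun u => ρ0 u * u ^ 2) volume 0 R := by
    refine hk.mono_fun' (by fun_prop) ?_
    rw [uIoc_of_le hR]
    filter_upwards [ae_restrict_mem measurableSet_Ioc] with u hu
    have hu' := Ioc_subset_Icc_self hu
    rw [Real.norm_of_nonneg (mul_nonneg (hρ u hu').1 (sq_nonneg u))]
    exact hbound u hu'
  calc Mfun ρ0 R ≤ 4 * π * ∫ u in (0 : ℝ)..R, k * u ^ 2 :=
        mul_le_mul_of_nonneg_left (intervalIntegral.integral_mono_on hR hint hk hbound)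
          (by positivity)
    _ = 4 * π / 3 * k * R ^ 3 := by
        rw [intervalIntegral.integral_const_mul, integral_pow]
        ring

theorem mul_Mfun_le (hR : 0 ≤ R) (hρm : Measurable ρ0)
    (hρ : ∀ u ∈ Icc 0 R, 0 ≤ ρ0 u ∧ ρ0 u ≤ k) :
    ρ0 R * Mfun ρ0 R ≤ 4 * π / 3 * k ^ 2 * R ^ 3 := by
  have hρR := hρ R (right_mem_Icc.2 hR)
  calc ρ0 R * Mfun ρ0 R ≤ k * (4 * π / 3 * k * R ^ 3) :=
        mul_le_mul hρR.2 (Mfun_le hR hρm hρ) (Mfun_nonneg hR fun u hu => (hρ u hu).1)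
          (hρR.1.trans hρR.2)
    _ = 4 * π / 3 * k ^ 2 * R ^ 3 := by ring

theorem integral_mul_Mfun_mul_sq_div_sq_le (hρm : Measurable ρ0)
    (hρ : ∀ u ∈ Icc (0 : ℝ) 1, 0 ≤ ρ0 u ∧ ρ0 u ≤ k) {r : ℝ → ℝ}
    (hint : Integrable (fun R => (R / r R) ^ 2) radialMeasure) :
    ∫ R in Ioo (0 : ℝ) 1, ρ0 R * Mfun ρ0 R * R ^ 2 / r R ^ 2 ≤
      4 * π / 3 * k ^ 2 * ∫ R, (R / r R) ^ 2 ∂radialMeasure := by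
  have hρR : ∀ R ∈ Ioo (0 : ℝ) 1, ∀ u ∈ Icc 0 R, 0 ≤ ρ0 u ∧ ρ0 u ≤ k :=
    fun R hR u hu => hρ u ⟨hu.1, hu.2.trans hR.2.le⟩
  rw [integral_radialMeasure, ← integral_const_mul]
  refine integral_mono_of_nonneg ?_ ((integrable_radialMeasure_iff.1 hint).const_mul _) ?_
  · filter_upwards [ae_restrict_mem measurableSet_Ioo] with R hR
    have hM := Mfun_nonneg hR.1.le fun u hu => (hρR R hR u hu).1
    have hρ0 := (hρ R (Ioo_subset_Icc_self hR)).1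
    simp only [Pi.zero_apply]
    positivity
  · filter_upwards [ae_restrict_mem measurableSet_Ioo] with R hR
    have hcube : R ^ 3 ≤ R ^ 2 := pow_le_pow_of_le_one hR.1.le hR.2.le (by norm_num)
    calc ρ0 R * Mfun ρ0 R * R ^ 2 / r R ^ 2 = ρ0 R * Mfun ρ0 R * (R / r R) ^ 2 := by
          rw [div_pow, mul_div_assoc]
      _ ≤ 4 * π / 3 * k ^ 2 * R ^ 2 * (R / r R) ^ 2 := by
          refine mul_le_mul_of_nonneg_right ((mul_Mfun_le hR.1.le hρm (hρR R hR)).trans ?_)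
            (sq_nonneg _)
          gcongr
      _ = 4 * π / 3 * k ^ 2 * ((R / r R) ^ 2 * R ^ 2) := by ring

end Mass

namespace Adm

variable {Φ : ℝ → ℝ → ℝ → ℝ → ℝ} {lam : ℝ} {r r' : ℝ → ℝ}

theorem integrableOn_deriv (hr : Adm Φ lam r r') : IntegrableOn r' (Icc 0 1) :=
  (intervalIntegrable_iff_integrableOn_Icc_of_le zero_le_one).1 hr.1

theorem continuousOn (hr : Adm Φ lam r r') : ContinuousOn r (Icc 0 1) := by
  have hprim := intervalIntegral.continuousOn_primitive_interval
    (uIcc_of_le (zero_le_one' ℝ) ▸ hr.integrableOn_deriv)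
  rw [uIcc_of_le zero_le_one] at hprim
  exact (continuousOn_const.add hprim).congr hr.2.1

theorem pos (hr : Adm Φ lam r r') {R : ℝ} (hR : R ∈ Ioc (0 : ℝ) 1) : 0 < r R := by
  have hsub : Ioo 0 R ⊆ Ioo (0 : ℝ) 1 := Ioo_subset_Ioo_right hR.2
  have hint : 0 < ∫ t in (0 : ℝ)..R, r' t := by
    rw [intervalIntegral.integral_of_le hR.1.le, integral_Ioc_eq_integral_Ioo]
    refine integral_pos_of_ae_pos ?_ (ae_restrict_of_ae_restrict_of_subset hsub hr.2.2.1)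
      (hr.integrableOn_deriv.mono_set (hsub.trans Ioo_subset_Icc_self))
    simpa using hR.1
  rw [hr.2.1 R ⟨hR.1.le, hR.2⟩]
  exact add_pos_of_nonneg_of_pos hr.2.2.2.2.1 hint

theorem ae_deriv_pos (hr : Adm Φ lam r r') : ∀ᵐ R ∂radialMeasure, 0 < r' R :=
  radialMeasure_absolutelyContinuous.ae_le hr.2.2.1

theorem ae_of_forall_pos (hr : Adm Φ lam r r') {P : ℝ → ℝ → ℝ → ℝ → Prop}
    (hP : ∀ R ∈ Icc (0 : ℝ) 1, ∀ v1 ∈ Ioi (0 : ℝ), ∀ v2 ∈ Ioi (0 : ℝ), ∀ v3 ∈ Ioi (0 : ℝ),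
      P R v1 v2 v3) :
    ∀ᵐ R ∂radialMeasure, P R (r' R) (r R / R) (r R / R) := by
  filter_upwards [ae_radialMeasure_mem_Ioo, hr.ae_deriv_pos] with R hR hr'R
  have hv : 0 < r R / R := div_pos (hr.pos (Ioo_subset_Ioc_self hR)) hR.1
  exact hP R (Ioo_subset_Icc_self hR) _ hr'R _ hv _ hv

theorem ae_deltaR_pos (hr : Adm Φ lam r r') : ∀ᵐ R ∂radialMeasure, 0 < deltaR r r' R :=
  hr.ae_of_forall_pos (P := fun _ v1 v2 _ => 0 < v1 * v2 ^ 2)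
    fun _ _ _ h1 _ h2 _ _ => mul_pos h1 (pow_pos h2 2)

theorem aemeasurable_deriv (hr : Adm Φ lam r r') : AEMeasurable r' radialMeasure :=
  (hr.integrableOn_deriv.mono_set Ioo_subset_Icc_self).aemeasurable.mono_ac
    radialMeasure_absolutelyContinuous

theorem aemeasurable_deltaR (hr : Adm Φ lam r r') :
    AEMeasurable (deltaR r r') radialMeasure := by
  have hrm : AEMeasurable r radialMeasure :=
    ((hr.continuousOn.mono Ioo_subset_Icc_self).aemeasurable measurableSet_Ioo).mono_ac
      radialMeasure_absolutelyContinuous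
  exact hr.aemeasurable_deriv.mul ((hrm.div aemeasurable_id).pow_const 2)

theorem integrable_energy (hr : Adm Φ lam r r') :
    Integrable (fun R => Φ R (r' R) (r R / R) (r R / R)) radialMeasure :=
  integrable_radialMeasure_iff.2 hr.2.2.2.2.2

theorem integrable_deriv_rpow (hr : Adm Φ lam r r') {C γ : ℝ} (hC : 0 < C)
    (hΦ : ∀ R ∈ Icc (0 : ℝ) 1, ∀ v1 ∈ Ioi (0 : ℝ), ∀ v2 ∈ Ioi (0 : ℝ), ∀ v3 ∈ Ioi (0 : ℝ),
      C * v1 ^ γ ≤ Φ R v1 v2 v3) :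
    Integrable (fun R => r' R ^ γ) radialMeasure :=
  integrable_of_const_mul_le hC hr.integrable_energy
    (hr.aemeasurable_deriv.pow_const γ).aestronglyMeasurable
    (hr.ae_deriv_pos.mono fun _ hR => rpow_nonneg hR.le γ) (hr.ae_of_forall_pos hΦ)

theorem integral_deriv_rpow_le (hr : Adm Φ lam r r') {C γ : ℝ} (hC : 0 < C)
    (hΦ : ∀ R ∈ Icc (0 : ℝ) 1, ∀ v1 ∈ Ioi (0 : ℝ), ∀ v2 ∈ Ioi (0 : ℝ), ∀ v3 ∈ Ioi (0 : ℝ),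
      C * v1 ^ γ ≤ Φ R v1 v2 v3) :
    ∫ R, r' R ^ γ ∂radialMeasure ≤ C⁻¹ * Imec Φ r r' := by
  rw [Imec, ← integral_radialMeasure fun R => Φ R (r' R) (r R / R) (r R / R),
    le_inv_mul_iff₀ hC, ← integral_const_mul]
  exact integral_mono_ae ((hr.integrable_deriv_rpow hC hΦ).const_mul C) hr.integrable_energy
    (hr.ae_of_forall_pos hΦ)

theorem memLp_deriv (hr : Adm Φ lam r r') {C γ : ℝ} (hC : 0 < C) (hγ : 0 < γ)
    (hΦ : ∀ R ∈ Icc (0 : ℝ) 1, ∀ v1 ∈ Ioi (0 : ℝ), ∀ v2 ∈ Ioi (0 : ℝ), ∀ v3 ∈ Ioi (0 : ℝ),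
      C * v1 ^ γ ≤ Φ R v1 v2 v3) :
    MemLp r' (ENNReal.ofReal γ) radialMeasure :=
  memLp_ofReal_of_integrable_rpow hγ (hr.ae_deriv_pos.mono fun _ hR => hR.le)
    hr.aemeasurable_deriv.aestronglyMeasurable (hr.integrable_deriv_rpow hC hΦ)

theorem memLp_inv_deltaR (hr : Adm Φ lam r r') {K s : ℝ} (hK : 0 < K) (hs : 0 < s)
    (hΦ : ∀ R ∈ Icc (0 : ℝ) 1, ∀ v1 ∈ Ioi (0 : ℝ), ∀ v2 ∈ Ioi (0 : ℝ), ∀ v3 ∈ Ioi (0 : ℝ),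
      K * (v1 * v2 * v3) ^ (-s) ≤ Φ R v1 v2 v3) :
    MemLp (fun R => (deltaR r r' R)⁻¹) (ENNReal.ofReal s) radialMeasure := by
  have hδ := hr.aemeasurable_deltaR.inv
  refine memLp_ofReal_of_integrable_rpow hs
    (hr.ae_deltaR_pos.mono fun _ hR => inv_nonneg.2 hR.le) hδ.aestronglyMeasurable ?_
  refine integrable_of_const_mul_le hK hr.integrable_energy
    (hδ.pow_const s).aestronglyMeasurable
    (hr.ae_deltaR_pos.mono fun _ hR => rpow_nonneg (inv_nonneg.2 hR.le) s) ?_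
  filter_upwards [hr.ae_of_forall_pos hΦ] with R hR
  rwa [← rpow_neg_eq_inv_rpow, deltaR, sq, ← mul_assoc]

theorem ae_div_sq_eq (hr : Adm Φ lam r r') :
    (fun R => (R / r R) ^ 2) =ᵐ[radialMeasure] fun R => r' R * (deltaR r r' R)⁻¹ := by
  filter_upwards [hr.ae_deriv_pos] with R hR
  rw [deltaR, mul_inv, mul_inv_cancel_left₀ hR.ne', ← inv_pow, inv_div]

section Conjugate

variable {γ γ' s : ℝ}

theorem integrable_div_sq (hr : Adm Φ lam r r') (hγ : γ.HolderConjugate γ') (hs : γ' ≤ s)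
    (hr' : MemLp r' (ENNReal.ofReal γ) radialMeasure)
    (hδ : MemLp (fun R => (deltaR r r' R)⁻¹) (ENNReal.ofReal s) radialMeasure) :
    Integrable (fun R => (R / r R) ^ 2) radialMeasure := by
  have : ENNReal.HolderConjugate (ENNReal.ofReal γ) (ENNReal.ofReal γ') := hγ.ennrealOfReal
  exact (hr'.integrable_mul (hδ.mono_exponent (ENNReal.ofReal_le_ofReal hs))).congr
    hr.ae_div_sq_eq.symm

theorem integral_div_sq_le (hr : Adm Φ lam r r') (hγ : γ.HolderConjugate γ') (hs : γ' ≤ s)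
    (hr' : MemLp r' (ENNReal.ofReal γ) radialMeasure)
    (hδ : MemLp (fun R => (deltaR r r' R)⁻¹) (ENNReal.ofReal s) radialMeasure) :
    ∫ R, (R / r R) ^ 2 ∂radialMeasure ≤
      (∫ R, r' R ^ γ ∂radialMeasure) ^ (1 / γ) *
        (∫ R, deltaR r r' R ^ (-s) ∂radialMeasure) ^ (1 / s) := by
  have hr'0 : ∀ᵐ R ∂radialMeasure, 0 ≤ r' R := hr.ae_deriv_pos.mono fun _ hR => hR.le
  have hδ0 : ∀ᵐ R ∂radialMeasure, 0 ≤ (deltaR r r' R)⁻¹ :=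
    hr.ae_deltaR_pos.mono fun _ hR => inv_nonneg.2 hR.le
  have hmass : radialMeasure.real univ ^ (1 / γ' - 1 / s) ≤ 1 :=
    rpow_le_one measureReal_nonneg
      (ENNReal.toReal_le_of_le_ofReal zero_le_one (by simpa using radialMeasure_univ_le_one))
      (sub_nonneg.2 (one_div_le_one_div_of_le hγ.symm.pos hs))
  rw [integral_congr_ae hr.ae_div_sq_eq]
  simp only [rpow_neg_eq_inv_rpow]
  refine (integral_mul_le_Lp_mul_Lq_of_conjExponent_le hγ hs hr'0 hδ0 hr' hδ).trans ?_
  refine mul_le_mul_of_nonneg_left (mul_le_of_le_one_right ?_ hmass) ?_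
  · exact rpow_nonneg (integral_nonneg_of_ae (hδ0.mono fun _ hR => rpow_nonneg hR s)) _
  · exact rpow_nonneg (integral_nonneg_of_ae (hr'0.mono fun _ hR => rpow_nonneg hR γ)) _

end Conjugate

end Adm

theorem stmt6_general {k C K γ s lam : ℝ} {ρ0 : ℝ → ℝ} {Φ : ℝ → ℝ → ℝ → ℝ → ℝ} {r r' : ℝ → ℝ}
    (hC : 0 < C) (hK : 0 < K) (hγ : 1 < γ) (hs : γ / (γ - 1) ≤ s) (hρm : Measurable ρ0)
    (hρ : ∀ R ∈ Icc (0 : ℝ) 1, 0 ≤ ρ0 R ∧ ρ0 R ≤ k)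
    (hΦγ : ∀ R ∈ Icc (0 : ℝ) 1, ∀ v1 ∈ Ioi (0 : ℝ), ∀ v2 ∈ Ioi (0 : ℝ), ∀ v3 ∈ Ioi (0 : ℝ),
      C * v1 ^ γ ≤ Φ R v1 v2 v3)
    (hΦs : ∀ R ∈ Icc (0 : ℝ) 1, ∀ v1 ∈ Ioi (0 : ℝ), ∀ v2 ∈ Ioi (0 : ℝ), ∀ v3 ∈ Ioi (0 : ℝ),
      K * (v1 * v2 * v3) ^ (-s) ≤ Φ R v1 v2 v3)
    (hr : Adm Φ lam r r') :
    (∫ R in Ioo (0 : ℝ) 1, ρ0 R * Mfun ρ0 R * R ^ 2 / (r R) ^ 2) ≤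
      4 * π / 3 * k ^ 2 * C⁻¹ ^ (1 / γ) *
        (∫ R in Ioo (0 : ℝ) 1, deltaR r r' R ^ (-s) * R ^ 2) ^ (1 / s) *
          Imec Φ r r' ^ (1 / γ) := by
  have hconj : γ.HolderConjugate (γ / (γ - 1)) := HolderConjugate.conjExponent hγ
  have hr' := hr.memLp_deriv hC hconj.pos hΦγ
  have hδ := hr.memLp_inv_deltaR hK (hconj.symm.pos.trans_le hs) hΦs
  have hr'0 : 0 ≤ ∫ R, r' R ^ γ ∂radialMeasure :=
    integral_nonneg_of_ae (hr.ae_deriv_pos.mono fun _ hR => rpow_nonneg hR.le γ)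
  have hδ0 : 0 ≤ ∫ R, deltaR r r' R ^ (-s) ∂radialMeasure :=
    integral_nonneg_of_ae (hr.ae_deltaR_pos.mono fun _ hR => rpow_nonneg hR.le (-s))
  have henergy := hr.integral_deriv_rpow_le hC hΦγ
  have hI : 0 ≤ Imec Φ r r' :=
    nonneg_of_mul_nonneg_right (hr'0.trans henergy) (inv_pos.2 hC)
  have hpow : (∫ R, r' R ^ γ ∂radialMeasure) ^ (1 / γ) ≤ (C⁻¹ * Imec Φ r r') ^ (1 / γ) :=
    rpow_le_rpow hr'0 henergy hconj.one_div_nonneg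
  rw [← integral_radialMeasure fun R => deltaR r r' R ^ (-s)]
  calc ∫ R in Ioo (0 : ℝ) 1, ρ0 R * Mfun ρ0 R * R ^ 2 / (r R) ^ 2
      ≤ 4 * π / 3 * k ^ 2 * ∫ R, (R / r R) ^ 2 ∂radialMeasure :=
        integral_mul_Mfun_mul_sq_div_sq_le hρm hρ (hr.integrable_div_sq hconj hs hr' hδ)
    _ ≤ 4 * π / 3 * k ^ 2 * ((∫ R, r' R ^ γ ∂radialMeasure) ^ (1 / γ) *
          (∫ R, deltaR r r' R ^ (-s) ∂radialMeasure) ^ (1 / s)) :=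
        mul_le_mul_of_nonneg_left (hr.integral_div_sq_le hconj hs hr' hδ) (by positivity)
    _ ≤ 4 * π / 3 * k ^ 2 * ((C⁻¹ * Imec Φ r r') ^ (1 / γ) *
          (∫ R, deltaR r r' R ^ (-s) ∂radialMeasure) ^ (1 / s)) := by
        gcongr
    _ = _ := by
        rw [mul_rpow (inv_nonneg.2 hC.le) hI]
        ring

theorem stmt6 (k1 C γ s : ℝ) (hk1 : 0 < k1) (hC : 0 < C) (hγ1 : 1 < γ) (hγ3 : γ < 3)
    (hs : γ / (γ - 1) ≤ s) :
    ∃ c > (0:ℝ), ∀ ρ0 : ℝ → ℝ, Measurable ρ0 →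
      (∀ R ∈ Icc (0:ℝ) 1, 0 ≤ ρ0 R ∧ ρ0 R ≤ k1) →
      ∀ Φ : ℝ → ℝ → ℝ → ℝ → ℝ, ∀ φ h : ℝ → ℝ,
      (∀ t ∈ Ioi (0:ℝ), 0 < φ t) → (∀ t ∈ Ioi (0:ℝ), 0 < h t) →
      StrictConvexOn ℝ (Ioi 0) φ → StrictConvexOn ℝ (Ioi 0) h →
      (∀ R ∈ Icc (0:ℝ) 1, ∀ v1 ∈ Ioi (0:ℝ), ∀ v2 ∈ Ioi (0:ℝ), ∀ v3 ∈ Ioi (0:ℝ),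
        φ v1 + φ v2 + φ v3 + h (v1 * v2 * v3) ≤ Φ R v1 v2 v3) →
      (∀ v ∈ Ioi (0:ℝ), C * v ^ γ ≤ φ v) →
      ∀ K : ℝ, 0 < K → (∀ d ∈ Ioi (0:ℝ), K * d ^ (-s) ≤ h d) →
      ∀ lam > (0:ℝ), ∀ r r' : ℝ → ℝ, Adm Φ lam r r' →
        (∫ R in Ioo (0:ℝ) 1, ρ0 R * Mfun ρ0 R * R ^ 2 / (r R) ^ 2) ≤
          c * (∫ R in Ioo (0:ℝ) 1, deltaR r r' R ^ (-s) * R ^ 2) ^ (1 / s) *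
            Imec Φ r r' ^ (1 / γ) := by
  refine ⟨4 * π / 3 * k1 ^ 2 * C⁻¹ ^ (1 / γ), by positivity, ?_⟩
  intro ρ0 hρm hρ Φ φ h hφ0 hh0 _ _ hG hφ K hK hh lam _ r r' hr
  refine stmt6_general hC hK hγ1 hs hρm hρ (fun R hR v1 h1 v2 h2 v3 h3 => ?_)
    (fun R hR v1 h1 v2 h2 v3 h3 => ?_) hr
  all_goals
    have hd : 0 < v1 * v2 * v3 := mul_pos (mul_pos h1 h2) h3
    linarith [hG R hR v1 h1 v2 h2 v3 h3, hφ v1 h1, hφ0 v1 h1, hφ0 v2 h2, hφ0 v3 h3, hh _ hd,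
      hh0 _ hd]
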